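/- arXiv:2507.01324 — 2 statements merged into one kernel-verified Lean document; each statement's English description precedes it below -/
import Mathlib

section
/- The aggregation operator H has a unique fixed point r* ∈ ℝ^𝒜, i.e., there exists exactly one vector r* with r*_x = (Hr*)(x) for every x ∈ 𝒜. -/
theorem avg_le_aux {ι : Type*} [Fintype ι] (w f g : ι → ℝ) (c : ℝ) (hw : ∀ i, 0 ≤ w i)
    (hw1 : ∑ i, w i = 1) (h : ∀ i, f i ≤ g i + c) :
    ∑ i, w i * f i ≤ ∑ i, w i * g i + c := by
  calc ∑ i, w i * f i ≤ ∑ i, w i * (g i + c) :=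
        Finset.sum_le_sum fun i _ => mul_le_mul_of_nonneg_left (h i) (hw i)
    _ = ∑ i, w i * g i + c := by
        simp only [mul_add, Finset.sum_add_distrib, ← Finset.sum_mul, hw1, one_mul]

/-- The aggregation operator `H` has a unique fixed point `r*`. -/
theorem aggregation_operator_unique_fixed_point
    (n : ℕ) [NeZero n] (C A : Type) [Fintype A] [Nonempty A]
    (U : Fin n → Finset C) (hU : ∀ i, (U i).Nonempty)
    (α : ℝ) (hα0 : 0 < α) (hα1 : α < 1)
    (p g : Fin n → C → Fin n → ℝ)
    (hp : ∀ i, ∀ u ∈ U i, ∀ j, 0 ≤ p i u j)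
    (hp1 : ∀ i, ∀ u ∈ U i, ∑ j, p i u j = 1)
    (d : A → Fin n → ℝ) (hd : ∀ x i, 0 ≤ d x i) (hd1 : ∀ x, ∑ i, d x i = 1)
    (φ : Fin n → A → ℝ) (hφ : ∀ j y, 0 ≤ φ j y) (hφ1 : ∀ j, ∑ y, φ j y = 1)
    (H : (A → ℝ) → A → ℝ)
    (hH : ∀ r x, H r x = ∑ i, d x i * (U i).inf' (hU i)
      (fun u => ∑ j, p i u j * (g i u j + α * ∑ y, φ j y * r y))) :
    ∃! r : A → ℝ, ∀ x, r x = H r x := by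
  have key : ∀ r s x, H r x ≤ H s x + α * dist r s := by
    intro r s x
    rw [hH, hH]
    refine avg_le_aux _ _ _ _ (hd x) (hd1 x) fun i => ?_
    rw [← sub_le_iff_le_add]
    refine Finset.le_inf' _ _ fun u hu => ?_
    rw [sub_le_iff_le_add]
    refine (Finset.inf'_le _ hu).trans ?_
    refine avg_le_aux _ _ _ _ (hp i u hu) (hp1 i u hu) fun j => ?_
    have h1 : ∑ y, φ j y * r y ≤ ∑ y, φ j y * s y + dist r s := by
      refine avg_le_aux _ _ _ _ (hφ j) (hφ1 j) fun y => ?_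
      have h2 := dist_le_pi_dist r s y
      rw [Real.dist_eq] at h2
      linarith [le_abs_self (r y - s y)]
    have h3 := mul_le_mul_of_nonneg_left h1 hα0.le
    linarith
  have hc : ContractingWith ⟨α, hα0.le⟩ H := by
    refine ⟨by exact_mod_cast hα1, LipschitzWith.of_dist_le_mul fun r s => ?_⟩
    change dist (H r) (H s) ≤ α * dist r s
    refine (dist_pi_le_iff (by positivity)).2 fun x => ?_
    rw [Real.dist_eq, abs_le]
    have h1 := key r s x
    have h2 := key s r x
    rw [dist_comm s r] at h2
    constructor <;> linarith
  refine ⟨ContractingWith.fixedPoint H hc, fun x => ?_, fun s hs => ?_⟩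
  · exact (congrFun hc.fixedPoint_isFixedPt x).symm
  · exact hc.fixedPoint_unique (funext fun x => (hs x).symm)
end

section
/- (Hard aggregation bound of Tsitsiklis and Van Roy) Suppose the aggregation probabilities are 0–1 valued, so the footprint sets S_y = { j : φ_{jy} = 1 }, y ∈ 𝒜, form a partition of {1,…,n}, and suppose that for each x ∈ 𝒜, d_{xi} > 0 implies i ∈ S_x. Let ε = max_{x∈𝒜} max_{ i,j ∈ S_x } |J*(i) − J*(j)|. Then for every x ∈ 𝒜 and every state i ∈ S_x, |J*(i) − r*_x| ≤ ε/(1−α). -/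
theorem inf_aux {C : Type} (s : Finset C) (hs : s.Nonempty) (f h : C → ℝ) (c : ℝ)
    (H : ∀ u ∈ s, |f u - h u| ≤ c) : |s.inf' hs f - s.inf' hs h| ≤ c := by
  obtain ⟨a, ha, ea⟩ := s.exists_mem_eq_inf' hs f
  obtain ⟨b, hb, eb⟩ := s.exists_mem_eq_inf' hs h
  have h1 := s.inf'_le f hb
  have h2 := s.inf'_le h ha
  have h3 := abs_le.1 (H a ha)
  have h4 := abs_le.1 (H b hb)
  rw [abs_le]
  constructor <;> linarith

/-- Hard aggregation bound of Tsitsiklis and Van Roy: if the aggregation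
probabilities are 0–1 valued (so the footprint sets `S_y = {j : φ_{jy} = 1}`
partition the state space) and each aggregate state `x` disaggregates only within
its footprint `S_x`, then `|J*(i) − r*_x| ≤ ε/(1−α)` for every `x` and `i ∈ S_x`,
where `ε = max_x max_{i,j ∈ S_x} |J*(i) − J*(j)|`. -/
theorem hard_aggregation_error_bound
    (n : ℕ) [NeZero n] (C A : Type) [Fintype A] [Nonempty A]
    (U : Fin n → Finset C) (hU : ∀ i, (U i).Nonempty)
    (α : ℝ) (hα0 : 0 < α) (hα1 : α < 1)
    (p g : Fin n → C → Fin n → ℝ)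
    (hp : ∀ i, ∀ u ∈ U i, ∀ j, 0 ≤ p i u j)
    (hp1 : ∀ i, ∀ u ∈ U i, ∑ j, p i u j = 1)
    (d : A → Fin n → ℝ) (hd : ∀ x i, 0 ≤ d x i) (hd1 : ∀ x, ∑ i, d x i = 1)
    (φ : Fin n → A → ℝ) (hφ : ∀ j y, 0 ≤ φ j y) (hφ1 : ∀ j, ∑ y, φ j y = 1)
    -- hard aggregation: the aggregation probabilities are 0–1 valued
    (hhard : ∀ j y, φ j y = 0 ∨ φ j y = 1)
    -- `J*` is the optimal cost vector of the original problem
    (Jstar : Fin n → ℝ)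
    (hJstar : ∀ i, Jstar i = (U i).inf' (hU i)
      (fun u => ∑ j, p i u j * (g i u j + α * Jstar j)))
    -- `r*` is the (unique) fixed point of the aggregation operator `H`
    (rstar : A → ℝ)
    (hfix : ∀ x, rstar x = ∑ i, d x i * (U i).inf' (hU i)
      (fun u => ∑ j, p i u j * (g i u j + α * ∑ y, φ j y * rstar y)))
    -- each aggregate state disaggregates only within its footprint `S_x`
    (hcond : ∀ x i, 0 < d x i → φ i x = 1)
    -- `ε = max_{x∈𝒜} max_{i,j ∈ S_x} |J*(i) − J*(j)|`
    (ε : ℝ)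
    (hε : ε = Finset.univ.sup' Finset.univ_nonempty
      (fun q : A × Fin n × Fin n =>
        if φ q.2.1 q.1 = 1 ∧ φ q.2.2 q.1 = 1 then |Jstar q.2.1 - Jstar q.2.2| else 0)) :
    ∀ (x : A) (i : Fin n), φ i x = 1 → |Jstar i - rstar x| ≤ ε / (1 - α) := by
  have hεb : ∀ x i j, φ i x = 1 → φ j x = 1 → |Jstar i - Jstar j| ≤ ε := by
    intro x i j hi hj
    have := Finset.le_sup' (fun q : A × Fin n × Fin n =>
        if φ q.2.1 q.1 = 1 ∧ φ q.2.2 q.1 = 1 then |Jstar q.2.1 - Jstar q.2.2| else 0)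
        (Finset.mem_univ (x, i, j))
    rw [← hε] at this
    simpa [hi, hj] using this
  have hV : ∀ i x, φ i x = 1 → ∑ y, φ i y * rstar y = rstar x := by
    intro i x hx
    rw [Finset.sum_eq_single x]
    · rw [hx, one_mul]
    · intro y _ hy
      rcases hhard i y with h | h
      · rw [h, zero_mul]
      · exfalso
        classical
        have h1 := Finset.sum_le_univ_sum_of_nonneg (s := {x, y}) (hφ i)
        rw [Finset.sum_pair hy.symm, hφ1] at h1
        linarith
    · intro h
      exact absurd (Finset.mem_univ x) h
  have hex : ∀ i, ∃ x, φ i x = 1 := by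
    intro i
    by_contra! hc
    have h0 : ∑ y, φ i y = 0 :=
      Finset.sum_eq_zero (fun y _ => (hhard i y).resolve_right (hc y))
    linarith [hφ1 i]
  obtain ⟨k, hk⟩ := Finite.exists_max (fun j => |Jstar j - ∑ y, φ j y * rstar y|)
  set M := |Jstar k - ∑ y, φ k y * rstar y| with hM
  have hT : ∀ i, |Jstar i - (U i).inf' (hU i)
      (fun u => ∑ j, p i u j * (g i u j + α * ∑ y, φ j y * rstar y))| ≤ α * M := by
    intro i
    rw [hJstar i]
    apply inf_aux
    intro u hu
    rw [← Finset.sum_sub_distrib]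
    calc _ ≤ ∑ j, |p i u j * (g i u j + α * Jstar j)
            - p i u j * (g i u j + α * ∑ y, φ j y * rstar y)| := Finset.abs_sum_le_sum_abs _ _
      _ ≤ ∑ j, p i u j * (α * M) := by
          apply Finset.sum_le_sum
          intro j _
          rw [← mul_sub, add_sub_add_left_eq_sub, ← mul_sub, abs_mul, abs_mul,
            abs_of_nonneg (hp i u hu j), abs_of_pos hα0]
          exact mul_le_mul_of_nonneg_left
            (mul_le_mul_of_nonneg_left (hk j) hα0.le) (hp i u hu j)
      _ = α * M := by rw [← Finset.sum_mul, hp1 i u hu, one_mul]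
  have key : ∀ x i, φ i x = 1 → |Jstar i - rstar x| ≤ ε + α * M := by
    intro x i hi
    have e : Jstar i - rstar x = ∑ l, d x l * (Jstar i - (U l).inf' (hU l)
      (fun u => ∑ j, p l u j * (g l u j + α * ∑ y, φ j y * rstar y))) := by
      simp only [mul_sub]
      rw [Finset.sum_sub_distrib, ← hfix, ← Finset.sum_mul, hd1, one_mul]
    rw [e]
    refine (Finset.abs_sum_le_sum_abs _ _).trans ?_
    calc _ ≤ ∑ l, d x l * (ε + α * M) := by
          apply Finset.sum_le_sum
          intro l _
          rw [abs_mul, abs_of_nonneg (hd x l)]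
          rcases (hd x l).eq_or_lt with h | h
          · rw [← h, zero_mul, zero_mul]
          · apply mul_le_mul_of_nonneg_left _ h.le
            exact (abs_sub_le _ (Jstar l) _).trans
              (add_le_add (hεb x i l hi (hcond x l h)) (hT l))
      _ = ε + α * M := by rw [← Finset.sum_mul, hd1, one_mul]
  intro x i hi
  obtain ⟨z, hz⟩ := hex k
  have h1 := key z k hz
  rw [← hV k z hz, ← hM] at h1
  have h2 := hk i
  rw [hV i x hi] at h2
  rw [le_div_iff₀ (by linarith)]
  have h3 : |Jstar i - rstar x| * (1 - α) ≤ M * (1 - α) :=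
    mul_le_mul_of_nonneg_right h2 (by linarith)
  linarith
end
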